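/- (Lemma 2.2(ii), concrete form.) Let W ⊆ ℂ be a bounded open set and let g : ℂ → ℂ be smooth with tsupport g compact and contained in W. Then the following are equivalent: (i) there is a compact set K ⊆ W such that Tg(λ) = 0 for all λ ∈ ℂ \ K; (ii) there is a smooth function h : ℂ → ℂ with tsupport h compact and contained in W such that ∂̄h = g. -/

import Mathlib

open MeasureTheory

/-- The Wirtinger derivative `∂̄f(z) = (1/2)·(∂ₓf(z) + i·∂_yf(z))`. -/
noncomputable def dbar (f : ℂ → ℂ) (z : ℂ) : ℂ :=
  (1 / 2) * (fderiv ℝ f z 1 + Complex.I * fderiv ℝ f z Complex.I)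

/-- The Cauchy transform `(Tg)(z) = (1/π) ∫_ℂ g(μ)/(z - μ) dA(μ)` (the integrand is `0`
at `μ = z` by the division-by-zero convention). -/
noncomputable def cauchyT (g : ℂ → ℂ) (z : ℂ) : ℂ :=
  (1 / (Real.pi : ℂ)) * ∫ μ : ℂ, g μ / (z - μ)

/-!
For `w = r e^{iθ}` one has `∂̄h(z + w) / w = (∂_r h + (i/r) ∂_θ h) / (2r)` at `z + w`, so the
Jacobian `r` cancels the singularity of the Cauchy kernel. For compactly supported `h` the radial
derivative integrates to `-h z` along every ray from `z` and the angular one to `0` along every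
circle, which gives `T(∂̄h) = h`. Since `T` is a convolution, it commutes with `∂̄`, so `∂̄(Tg) = g`
as well. Hence the only compactly supported candidate for `h` is `Tg` itself.
-/

open Set Complex ComplexConjugate
open scoped Convolution

section DirectionalDerivatives

variable {E F : Type*} [NormedAddCommGroup E] [NormedSpace ℝ E]
  [NormedAddCommGroup F] [NormedSpace ℝ F] [CompleteSpace F]

lemma integral_Ioi_fderiv_ray {f : E → F} (hf : ContDiff ℝ 1 f) (hfc : HasCompactSupport f)
    (x : E) {v : E} (hv : v ≠ 0) :
    ∫ r in Ioi (0 : ℝ), fderiv ℝ f (x + r • v) v = -f x := by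
  have ray_embedding : Topology.IsClosedEmbedding fun r : ℝ ↦ x + r • v :=
    (Homeomorph.addLeft x).isClosedEmbedding.comp (isClosedEmbedding_smul_left hv)
  have deriv_ray (r : ℝ) : deriv (fun r : ℝ ↦ f (x + r • v)) r = fderiv ℝ f (x + r • v) v :=
    ((hf.differentiable one_ne_zero _).hasFDerivAt.comp_hasDerivAt r
      (by simpa using ((hasDerivAt_id r).smul_const v).const_add x)).deriv
  simpa [Function.comp_def, deriv_ray] using HasCompactSupport.integral_Ioi_deriv_eq
    (hf.comp (by fun_prop : ContDiff ℝ 1 fun r : ℝ ↦ x + r • v))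
    (hfc.comp_isClosedEmbedding ray_embedding) 0

lemma integral_fderiv_circle_tangent {f : ℂ → F} (hf : ContDiff ℝ 1 f) (z : ℂ) {r : ℝ}
    (hr : r ≠ 0) :
    ∫ θ in Ioo (-Real.pi) Real.pi, fderiv ℝ f (circleMap z r θ) (exp (θ * I) * I) = 0 := by
  have hasDerivAt_circle (θ : ℝ) : HasDerivAt (fun θ ↦ f (circleMap z r θ))
      (r • fderiv ℝ f (circleMap z r θ) (exp (θ * I) * I)) θ := by
    rw [← map_smul, real_smul, ← mul_assoc, ← circleMap_zero]
    exact (hf.differentiable one_ne_zero _).hasFDerivAt.comp_hasDerivAt θ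
      (hasDerivAt_circleMap z r θ)
  have continuous_deriv :
      Continuous fun θ : ℝ ↦ r • fderiv ℝ f (circleMap z r θ) (exp (θ * I) * I) :=
    (((hf.continuous_fderiv one_ne_zero).comp (continuous_circleMap z r)).clm_apply
      (by fun_prop)).const_smul r
  have closes_up : circleMap z r Real.pi = circleMap z r (-Real.pi) := by
    simp [circleMap]
  have scaled_eq_zero := intervalIntegral.integral_eq_sub_of_hasDerivAt
    (fun θ _ ↦ hasDerivAt_circle θ) (continuous_deriv.intervalIntegrable (-Real.pi) Real.pi)
  rw [closes_up, sub_self, intervalIntegral.integral_smul,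
    intervalIntegral.integral_of_le (by linarith [Real.pi_pos]),
    integral_Ioc_eq_integral_Ioo] at scaled_eq_zero
  exact (smul_eq_zero.mp scaled_eq_zero).resolve_left hr

end DirectionalDerivatives

section PolarCoordinates

variable {F : Type*} [NormedAddCommGroup F] [NormedSpace ℝ F]

lemma add_polarCoord_symm_eq_circleMap (z : ℂ) (p : ℝ × ℝ) :
    z + Complex.polarCoord.symm p = circleMap z p.1 p.2 := by
  simp [Complex.polarCoord_symm_apply, circleMap, exp_mul_I]

lemma integrableOn_polarCoord_target_clm_apply {L : ℂ → ℂ →L[ℝ] F} (hL : Continuous L)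
    (hLc : HasCompactSupport L) (z : ℂ) {v : ℝ → ℂ} (hv : Continuous v) :
    IntegrableOn (fun p : ℝ × ℝ ↦ L (circleMap z p.1 p.2) (v p.2)) polarCoord.target := by
  obtain ⟨R, hR⟩ := hLc.isCompact.isBounded.subset_closedBall z
  have continuous_integrand :
      Continuous fun p : ℝ × ℝ ↦ L (circleMap z p.1 p.2) (v p.2) :=
    (hL.comp (by unfold circleMap; fun_prop)).clm_apply (by fun_prop)
  refine (continuous_integrand.continuousOn.integrableOn_compact
    (isCompact_Icc.prod isCompact_Icc :
      IsCompact (Icc 0 R ×ˢ Icc (-Real.pi) Real.pi))).of_forall_sdiff_eq_zero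
    polarCoord.open_target.measurableSet ?_
  rintro ⟨r, θ⟩ ⟨⟨hr, hθ⟩, outside⟩
  have hRr : R < r := by
    by_contra! hrR
    exact outside ⟨⟨le_of_lt hr, hrR⟩, Ioo_subset_Icc_self hθ⟩
  have notMem_tsupport : circleMap z r θ ∉ tsupport L := fun hmem ↦ by
    have := hR hmem
    rw [mem_closedBall_iff_norm, circleMap_sub_center, norm_circleMap_zero] at this
    linarith [le_abs_self r]
  simp [image_eq_zero_of_notMem_tsupport notMem_tsupport]

lemma setIntegral_polarCoord_target_fderiv_radial [CompleteSpace F] {f : ℂ → F}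
    (hf : ContDiff ℝ 1 f) (hfc : HasCompactSupport f) (z : ℂ) :
    ∫ p in polarCoord.target, fderiv ℝ f (circleMap z p.1 p.2) (exp (p.2 * I)) =
      -(2 * Real.pi) • f z := by
  have integrable := integrableOn_polarCoord_target_clm_apply
    (hf.continuous_fderiv one_ne_zero) (hfc.fderiv ℝ) z
    (by fun_prop : Continuous fun θ : ℝ ↦ exp (θ * I))
  rw [IntegrableOn, polarCoord_target, Measure.volume_eq_prod, ← Measure.prod_restrict]
    at integrable
  have along_ray (θ : ℝ) :
      ∫ r in Ioi (0 : ℝ), fderiv ℝ f (circleMap z r θ) (exp (θ * I)) = -f z := by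
    simpa only [circleMap, real_smul] using integral_Ioi_fderiv_ray hf hfc z (exp_ne_zero (θ * I))
  rw [polarCoord_target, Measure.volume_eq_prod, ← Measure.prod_restrict,
    integral_prod_symm _ integrable]
  simp only [along_ray, setIntegral_const,
    Real.volume_real_Ioo_of_le (neg_le_self Real.pi_pos.le), smul_neg, neg_smul]
  ring_nf

lemma setIntegral_polarCoord_target_fderiv_angular [CompleteSpace F] {f : ℂ → F}
    (hf : ContDiff ℝ 1 f) (hfc : HasCompactSupport f) (z : ℂ) :
    ∫ p in polarCoord.target, fderiv ℝ f (circleMap z p.1 p.2) (exp (p.2 * I) * I) = 0 := by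
  have integrable := integrableOn_polarCoord_target_clm_apply
    (hf.continuous_fderiv one_ne_zero) (hfc.fderiv ℝ) z
    (by fun_prop : Continuous fun θ : ℝ ↦ exp (θ * I) * I)
  rw [polarCoord_target, Measure.volume_eq_prod, setIntegral_prod _ integrable]
  exact setIntegral_eq_zero_of_forall_eq_zero fun r hr ↦
    integral_fderiv_circle_tangent hf z (ne_of_gt hr)

end PolarCoordinates

lemma conj_mul_dbar (f : ℂ → ℂ) (z v : ℂ) :
    conj v * dbar f z = (1 / 2) * (fderiv ℝ f z v + I * fderiv ℝ f z (v * I)) := by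
  have fderiv_apply (u : ℂ) :
      fderiv ℝ f z u = u.re * fderiv ℝ f z 1 + u.im * fderiv ℝ f z I := by
    conv_lhs => rw [← re_add_im u, ← mul_one (u.re : ℂ), ← real_smul, ← real_smul]
    rw [map_add, map_smul, map_smul, real_smul, real_smul]
  have conj_eq : conj v = v.re - v.im * I := by
    apply Complex.ext <;> simp
  rw [fderiv_apply v, fderiv_apply (v * I), mul_I_re, mul_I_im, conj_eq, dbar]
  push_cast
  linear_combination (-(1 / 2) * v.im * fderiv ℝ f z I) * I_mul_I

lemma smul_inv_polarCoord_symm_mul_dbar (f : ℂ → ℂ) (z : ℂ) {p : ℝ × ℝ} (hp : p.1 ≠ 0) :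
    p.1 • ((Complex.polarCoord.symm p)⁻¹ * dbar f (z + Complex.polarCoord.symm p)) =
      (1 / 2) * (fderiv ℝ f (circleMap z p.1 p.2) (exp (p.2 * I)) +
        I * fderiv ℝ f (circleMap z p.1 p.2) (exp (p.2 * I) * I)) := by
  have inv_eq : (Complex.polarCoord.symm p)⁻¹ = (p.1 : ℂ)⁻¹ * conj (exp (p.2 * I)) := by
    rw [← zero_add (Complex.polarCoord.symm p), add_polarCoord_symm_eq_circleMap, circleMap_zero,
      mul_inv, ← exp_conj, ← exp_neg]
    simp
  rw [← conj_mul_dbar, add_polarCoord_symm_eq_circleMap, inv_eq, real_smul, mul_assoc,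
    mul_inv_cancel_left₀ (ofReal_ne_zero.mpr hp)]

lemma integral_inv_mul_dbar_add {h : ℂ → ℂ} (hh : ContDiff ℝ 1 h) (hhc : HasCompactSupport h)
    (z : ℂ) : ∫ w : ℂ, w⁻¹ * dbar h (z + w) = -Real.pi * h z := by
  have integrable {v : ℝ → ℂ} (hv : Continuous v) :
      IntegrableOn (fun p : ℝ × ℝ ↦ fderiv ℝ h (circleMap z p.1 p.2) (v p.2)) polarCoord.target :=
    integrableOn_polarCoord_target_clm_apply (hh.continuous_fderiv one_ne_zero) (hhc.fderiv ℝ) z hv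
  rw [← Complex.integral_comp_polarCoord_symm,
    setIntegral_congr_fun polarCoord.open_target.measurableSet
      fun p hp ↦ smul_inv_polarCoord_symm_mul_dbar h z (ne_of_gt hp.1),
    integral_const_mul, integral_add (integrable (v := fun θ ↦ exp (θ * I)) (by fun_prop))
      ((integrable (v := fun θ ↦ exp (θ * I) * I) (by fun_prop)).const_mul I), integral_const_mul,
    setIntegral_polarCoord_target_fderiv_radial hh hhc,
    setIntegral_polarCoord_target_fderiv_angular hh hhc, real_smul]
  push_cast
  ring

theorem cauchyT_dbar {h : ℂ → ℂ} (hh : ContDiff ℝ 1 h) (hhc : HasCompactSupport h) :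
    cauchyT (dbar h) = h := by
  ext z
  have recentre : ∫ μ : ℂ, dbar h μ / (z - μ) = -∫ w : ℂ, w⁻¹ * dbar h (z + w) := by
    rw [← integral_add_left_eq_self _ z, ← integral_neg]
    congr 1 with w
    rw [sub_add_cancel_left, div_neg, div_eq_inv_mul]
  rw [cauchyT, recentre, integral_inv_mul_dbar_add hh hhc]
  have : (Real.pi : ℂ) ≠ 0 := ofReal_ne_zero.mpr Real.pi_ne_zero
  field_simp

lemma locallyIntegrable_complex_inv : LocallyIntegrable fun w : ℂ ↦ w⁻¹ :=
  locallyIntegrable_of_norm_le_rpow (C := 1) (α := 1) (by simp) (by simp)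
    (by simp [Real.rpow_neg_one]) (by fun_prop)

lemma cauchyT_eq_smul_convolution (g : ℂ → ℂ) :
    cauchyT g = (1 / (Real.pi : ℂ)) •
      ((fun w : ℂ ↦ w⁻¹) ⋆[ContinuousLinearMap.mul ℝ ℂ, volume] g) := by
  ext z
  simp [cauchyT, convolution_eq_swap, div_eq_inv_mul]

section Regularity

variable {f g : ℂ → ℂ}

lemma integrable_div_sub (hg : Continuous g) (hgc : HasCompactSupport g) (z : ℂ) :
    Integrable fun μ ↦ g μ / (z - μ) := by
  simpa [div_eq_inv_mul] using (hgc.convolutionExists_right (ContinuousLinearMap.mul ℝ ℂ)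
    locallyIntegrable_complex_inv hg z).integrable_swap

lemma cauchyT_add (hf : Continuous f) (hfc : HasCompactSupport f) (hg : Continuous g)
    (hgc : HasCompactSupport g) (z : ℂ) :
    cauchyT (fun w ↦ f w + g w) z = cauchyT f z + cauchyT g z := by
  simp only [cauchyT, add_div, ← mul_add,
    integral_add (integrable_div_sub hf hfc z) (integrable_div_sub hg hgc z)]

lemma cauchyT_const_mul (c z : ℂ) :
    cauchyT (fun w ↦ c * g w) z = c * cauchyT g z := by
  simp only [cauchyT, mul_div_assoc, integral_const_mul, mul_left_comm]

lemma contDiff_cauchyT {n : ℕ∞} (hg : ContDiff ℝ n g) (hgc : HasCompactSupport g) :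
    ContDiff ℝ n (cauchyT g) := by
  rw [cauchyT_eq_smul_convolution]
  exact contDiff_const.smul (hgc.contDiff_convolution_right _ locallyIntegrable_complex_inv hg)

lemma fderiv_cauchyT_apply (hg : ContDiff ℝ 1 g) (hgc : HasCompactSupport g) (z v : ℂ) :
    fderiv ℝ (cauchyT g) z v = cauchyT (fun w ↦ fderiv ℝ g w v) z := by
  have hasFDerivAt_conv := hgc.hasFDerivAt_convolution_right (ContinuousLinearMap.mul ℝ ℂ)
    locallyIntegrable_complex_inv hg z
  rw [cauchyT_eq_smul_convolution, (hasFDerivAt_conv.const_smul (1 / (Real.pi : ℂ))).fderiv,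
    cauchyT_eq_smul_convolution, Pi.smul_apply, ← convolution_precompR_apply _
      locallyIntegrable_complex_inv (hgc.fderiv ℝ) (hg.continuous_fderiv one_ne_zero)]
  rfl

lemma dbar_cauchyT_eq_cauchyT_dbar (hg : ContDiff ℝ 1 g) (hgc : HasCompactSupport g) :
    dbar (cauchyT g) = cauchyT (dbar g) := by
  ext z
  have continuous_fderiv_apply (v : ℂ) : Continuous fun w ↦ fderiv ℝ g w v :=
    (hg.continuous_fderiv one_ne_zero).clm_apply continuous_const
  have compact_fderiv_apply (v : ℂ) : HasCompactSupport fun w ↦ fderiv ℝ g w v :=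
    hgc.fderiv_apply ℝ v
  have compact_I_mul_fderiv_apply_I : HasCompactSupport fun w ↦ I * fderiv ℝ g w I :=
    (compact_fderiv_apply I).mul_left
  simp only [dbar, fderiv_cauchyT_apply hg hgc, ← cauchyT_const_mul I]
  rw [← cauchyT_add (continuous_fderiv_apply 1) (compact_fderiv_apply 1)
      ((continuous_fderiv_apply I).const_mul I) compact_I_mul_fderiv_apply_I,
    ← cauchyT_const_mul]
  rfl

theorem dbar_cauchyT (hg : ContDiff ℝ 1 g) (hgc : HasCompactSupport g) :
    dbar (cauchyT g) = g := by
  rw [dbar_cauchyT_eq_cauchyT_dbar hg hgc, cauchyT_dbar hg hgc]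

end Regularity

theorem cauchyT_vanishes_iff_dbar_exact_general (W : Set ℂ) {n : ℕ∞} (hn : 1 ≤ n) {g : ℂ → ℂ}
    (hg : ContDiff ℝ n g) (hgc : HasCompactSupport g) :
    (∃ K : Set ℂ, IsCompact K ∧ K ⊆ W ∧ ∀ z ∉ K, cauchyT g z = 0) ↔
      (∃ h : ℂ → ℂ, ContDiff ℝ n h ∧ IsCompact (tsupport h) ∧ tsupport h ⊆ W ∧
        ∀ z : ℂ, dbar h z = g z) := by
  have hn' : (1 : WithTop ℕ∞) ≤ n := mod_cast hn
  constructor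
  · rintro ⟨K, hK, hKW, hTK⟩
    have tsupport_subset : tsupport (cauchyT g) ⊆ K :=
      closure_minimal (Function.support_subset_iff'.mpr hTK) hK.isClosed
    exact ⟨cauchyT g, contDiff_cauchyT hg hgc,
      hK.of_isClosed_subset (isClosed_tsupport _) tsupport_subset, tsupport_subset.trans hKW,
      congrFun (dbar_cauchyT (hg.of_le hn') hgc)⟩
  · rintro ⟨h, hh, hhc, hhW, hdbar⟩
    obtain rfl : dbar h = g := funext hdbar
    exact ⟨tsupport h, hhc, hhW, fun z hz ↦ by
      rw [cauchyT_dbar (hh.of_le hn') hhc, image_eq_zero_of_notMem_tsupport hz]⟩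

/-- Lemma 2.2(ii): for a bounded open `W ⊆ ℂ` and a smooth `g` with compact support
contained in `W`, the Cauchy transform `Tg` vanishes outside some compact subset of `W`
if and only if `g = ∂̄h` for some smooth `h` with compact support contained in `W`. -/
theorem cauchyT_vanishes_iff_dbar_exact (W : Set ℂ) (hW : IsOpen W)
    (hWb : Bornology.IsBounded W) (g : ℂ → ℂ) (hg : ContDiff ℝ (⊤ : ℕ∞) g)
    (hgc : IsCompact (tsupport g)) (hgW : tsupport g ⊆ W) :
    (∃ K : Set ℂ, IsCompact K ∧ K ⊆ W ∧ ∀ z ∉ K, cauchyT g z = 0) ↔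
      (∃ h : ℂ → ℂ, ContDiff ℝ (⊤ : ℕ∞) h ∧ IsCompact (tsupport h) ∧ tsupport h ⊆ W ∧
        ∀ z : ℂ, dbar h z = g z) := by
  exact cauchyT_vanishes_iff_dbar_exact_general W le_top hg hgc
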